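/- Let p be an odd prime. Then ∑_{k=1}^{(p-1)/2} 4^k/(k·(2k−1)·C(2k,k)) ≡ 2·E_{p-3} (mod p), as a congruence of rational numbers with p-integral denominators. -/

import Mathlib

/-!
Write `p = 2n + 1`, so `2n = -1` in `ZMod p`; the case `p = 3` is a direct computation, so let
`p > 3`.

* Since `C(2k,k) = (-4)^k C(n,k)` in `ZMod p`, the sum becomes `∑ (-1)^k / (k (2k-1) C(n,k))`. The
  reflection `k ↦ n + 1 - k` fixes `k C(n,k)` and sends `2k - 1` to `-2k`, so the sum is
  `(-1)^n / 2 * ∑ (-1)^k / (k^2 C(n,k))`.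
* In any field in which `1, ..., n` are invertible,
  `∑_{k=1}^n (-1)^k / (k^2 C(n,k)) = ∑_{k=1}^n (1 + 2 (-1)^k) / k^2` (`sum_inv_sq_choose`), by
  induction on `n`, the increments being evaluated by the alternating sum of reciprocals of
  binomial coefficients (`sum_inv_choose`).
* In `ZMod p`, `E_r = ∑_{j<p} (-1)^j (2j+1)^r` (`euler_zmod`), because the right side satisfies the
  recurrence of the Euler numbers: the sum over even `k` turns it into a telescoping sum. Centring
  the sum at `j = n` gives `2 E_{p-3} = (-1)^n ∑_{k=1}^n (-1)^k / k^2`.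
* Finally `∑_{k=1}^n 1 / k^2 = 0` in `ZMod p`, as it is half of a power sum over the whole field.

The passage from `ℚ` to `ZMod p` goes through the relation `Reduces`.
-/

open Finset

/-! ### Reciprocals of binomial coefficients in a field -/

lemma factorial_cast_ne {K : Type*} [Field K] {N : ℕ}
    (hN : ∀ k : ℕ, 1 ≤ k → k ≤ N → (k : K) ≠ 0) (m : ℕ) (hm : m ≤ N) :
    (m.factorial : K) ≠ 0 := by
  induction m with
  | zero => simp
  | succ m ih =>
    rw [Nat.factorial_succ, Nat.cast_mul]
    exact mul_ne_zero (hN _ (by omega) hm) (ih (by omega))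

lemma choose_cast_ne {K : Type*} [Field K] {N : ℕ}
    (hN : ∀ k : ℕ, 1 ≤ k → k ≤ N → (k : K) ≠ 0) (m j : ℕ) (hm : m ≤ N) (hj : j ≤ m) :
    (m.choose j : K) ≠ 0 := by
  intro h
  have h1 := congrArg (Nat.cast (R := K)) (Nat.choose_mul_factorial_mul_factorial hj)
  push_cast at h1
  rw [h] at h1
  exact factorial_cast_ne hN m hm (by rw [← h1]; ring)

/-- The identity behind the telescoping in `sum_inv_choose`. -/
lemma inv_choose_add {K : Type*} [Field K] {N : ℕ}
    (hN : ∀ k : ℕ, 1 ≤ k → k ≤ N → (k : K) ≠ 0) (m j : ℕ) (hm : m + 1 ≤ N) (hj : j ≤ m) :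
    ((m : K) + 2) * ((m.choose j : K))⁻¹ =
      ((m : K) + 1) * (((m + 1).choose j : K)⁻¹ + ((m + 1).choose (j + 1) : K)⁻¹) := by
  have a := choose_cast_ne hN m j (by omega) hj
  have b := choose_cast_ne hN (m + 1) j hm (by omega)
  have c := choose_cast_ne hN (m + 1) (j + 1) hm (by omega)
  have h1 : ((m : K) + 1) * m.choose j = (m + 1).choose (j + 1) * ((j : K) + 1) := by
    exact_mod_cast congrArg (Nat.cast (R := K)) (Nat.add_one_mul_choose_eq m j)
  have h2 : ((m + 1).choose j : K) * ((m : K) + 1 - j) = ((m : K) + 1) * m.choose j := by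
    have := congrArg (Nat.cast (R := K)) (Nat.choose_mul_succ_eq m j)
    rw [Nat.cast_mul, Nat.cast_mul, Nat.cast_sub (by omega)] at this
    push_cast at this
    linear_combination -this
  have e1 : ((m : K) + 1) * ((m + 1).choose j : K)⁻¹ = ((m : K) + 1 - j) * (m.choose j : K)⁻¹ := by
    field_simp
    linear_combination -h2
  have e2 : ((m : K) + 1) * ((m + 1).choose (j + 1) : K)⁻¹ =
      ((j : K) + 1) * (m.choose j : K)⁻¹ := by
    field_simp
    linear_combination h1
  linear_combination -e1 - e2

lemma alternating_telescope {K : Type*} [Field K] (f : ℕ → K) (m : ℕ) :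
    ∑ j ∈ range m, (-1 : K) ^ j * (f j + f (j + 1)) = f 0 - (-1) ^ m * f m := by
  induction m with
  | zero => simp
  | succ m ih => rw [sum_range_succ, ih]; ring

lemma sum_inv_choose {K : Type*} [Field K] {N : ℕ}
    (hN : ∀ k : ℕ, 1 ≤ k → k ≤ N → (k : K) ≠ 0) (m : ℕ) (hm : m + 1 ≤ N) :
    ((m : K) + 2) * ∑ j ∈ range (m + 1), (-1 : K) ^ j * (m.choose j : K)⁻¹ =
      ((m : K) + 1) * (1 + (-1) ^ m) := by
  have h := alternating_telescope (fun j => ((m + 1).choose j : K)⁻¹) (m + 1)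
  have e : ((m : K) + 2) * ∑ j ∈ range (m + 1), (-1 : K) ^ j * (m.choose j : K)⁻¹ =
      ((m : K) + 1) * ∑ j ∈ range (m + 1),
        (-1 : K) ^ j * (((m + 1).choose j : K)⁻¹ + ((m + 1).choose (j + 1) : K)⁻¹) := by
    rw [mul_sum, mul_sum]
    refine sum_congr rfl fun j hj => ?_
    have := inv_choose_add hN m j hm (by simp at hj; omega)
    linear_combination (-1 : K) ^ j * this
  rw [e, h, Nat.choose_zero_right, Nat.choose_self, Nat.cast_one, inv_one]
  ring

/-- Summation indices are shifted: the term `j` belongs to `k = j + 1`. -/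
lemma sum_inv_sq_choose {K : Type*} [Field K] {N : ℕ}
    (hN : ∀ k : ℕ, 1 ≤ k → k ≤ N → (k : K) ≠ 0) (n : ℕ) (hn : n ≤ N) :
    ∑ j ∈ range n, (-1 : K) ^ (j + 1) / (((j : K) + 1) ^ 2 * (n.choose (j + 1) : K)) =
      ∑ j ∈ range n, (1 + 2 * (-1 : K) ^ (j + 1)) / ((j : K) + 1) ^ 2 := by
  induction n with
  | zero => simp
  | succ n ih =>
    rw [sum_range_succ, sum_range_succ, ← ih (by omega)]
    have hn1 : (n : K) + 1 ≠ 0 := by exact_mod_cast hN (n + 1) (by omega) hn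
    have key : ∑ j ∈ range n,
        (-1 : K) ^ (j + 1) / (((j : K) + 1) ^ 2 * ((n + 1).choose (j + 1) : K)) =
        ∑ j ∈ range n, (-1 : K) ^ (j + 1) / (((j : K) + 1) ^ 2 * (n.choose (j + 1) : K)) +
        (1 + (-1) ^ (n + 1)) / ((n : K) + 1) ^ 2 := by
      rcases n with _ | m
      · simp
      have hm1 : (m : K) + 1 ≠ 0 := by exact_mod_cast hN (m + 1) (by omega) (by omega)
      have hS := sum_inv_choose hN m (by omega)
      have hm2 : (m : K) + 2 ≠ 0 := by
        have := hN (m + 2) (by omega) (by omega)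
        exact_mod_cast this
      have : ∀ j ∈ range (m + 1),
          (-1 : K) ^ (j + 1) / (((j : K) + 1) ^ 2 * ((m + 1 + 1).choose (j + 1) : K)) =
          (-1 : K) ^ (j + 1) / (((j : K) + 1) ^ 2 * ((m + 1).choose (j + 1) : K)) +
          1 / (((m : K) + 1) * ((m : K) + 2)) * ((-1 : K) ^ j * (m.choose j : K)⁻¹) := by
        intro j hj
        have hj' : j ≤ m := by simp at hj; omega
        have hj1 : (j : K) + 1 ≠ 0 := by exact_mod_cast hN (j + 1) (by omega) (by omega)
        have a := choose_cast_ne hN m j (by omega) hj'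
        have b := choose_cast_ne hN (m + 1) (j + 1) (by omega) (by omega)
        have c := choose_cast_ne hN (m + 1 + 1) (j + 1) (by omega) (by omega)
        have h1 : ((m : K) + 1) * m.choose j = (m + 1).choose (j + 1) * ((j : K) + 1) := by
          exact_mod_cast congrArg (Nat.cast (R := K)) (Nat.add_one_mul_choose_eq m j)
        have h2 : ((m + 1 + 1).choose (j + 1) : K) * ((m : K) + 1 - j) =
            ((m : K) + 2) * (m + 1).choose (j + 1) := by
          have := congrArg (Nat.cast (R := K)) (Nat.choose_mul_succ_eq (m + 1) (j + 1))
          rw [Nat.cast_mul, Nat.cast_mul, Nat.cast_sub (by omega)] at this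
          push_cast at this
          linear_combination -this
        have e1 : ((m + 1 + 1).choose (j + 1) : K)⁻¹ =
            ((m : K) + 1 - j) / (m + 2) * ((m + 1).choose (j + 1) : K)⁻¹ := by
          field_simp
          linear_combination -h2
        have e2 : (m.choose j : K)⁻¹ =
            ((m : K) + 1) / (j + 1) * ((m + 1).choose (j + 1) : K)⁻¹ := by
          field_simp
          linear_combination -h1
        rw [e2, div_eq_mul_inv, mul_inv, e1]
        field_simp
        ring
      rw [sum_congr rfl this, sum_add_distrib, ← mul_sum]
      congr 1
      push_cast
      have : ((m : K) + 1 + 1) = m + 2 := by ring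
      rw [this]
      -- Naming the sum keeps `field_simp` from rewriting inside it.
      generalize ∑ j ∈ range (m + 1), (-1 : K) ^ j * (m.choose j : K)⁻¹ = S at hS
      field_simp
      linear_combination hS
    rw [key]
    simp
    field_simp
    ring

/-! ### Sums in `ZMod p` -/

/-- Splitting a sum of `2 n + 1` terms around its middle term. -/
lemma sum_centered {K : Type*} [AddCommMonoid K] (f : ℕ → K) (n : ℕ) :
    ∑ j ∈ range (2 * n + 1), f j =
      ∑ j ∈ range n, f (n - 1 - j) + f n + ∑ j ∈ range n, f (n + 1 + j) := by
  rw [sum_range_reflect, ← sum_range_succ, ← sum_range_add]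
  congr 2
  omega

/-- The sum over even `k` extracts the even part of the binomial expansion of `(x + 1) ^ n`. -/
lemma even_binomial {K : Type*} [CommRing K] (x : K) (n : ℕ) :
    2 * ∑ k ∈ range (n + 1), (if 2 ∣ k then (n.choose k : K) * x ^ (n - k) else 0) =
      (x + 1) ^ n + (x - 1) ^ n := by
  rw [add_comm x 1, sub_eq_add_neg, add_comm x (-1), add_pow, add_pow, ← sum_add_distrib, mul_sum]
  refine sum_congr rfl fun k _ => ?_
  split_ifs with h
  · rw [Even.neg_one_pow (even_iff_two_dvd.2 h)]; simp; ring
  · rw [Odd.neg_one_pow (by rwa [← Nat.not_even_iff_odd, even_iff_two_dvd])]; simp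

lemma euler_zmod (p : ℕ) [Fact p.Prime] (hodd : Odd p) (E : ℕ → ℤ) (hE0 : E 0 = 1)
    (hE : ∀ n : ℕ, 1 ≤ n →
      (∑ k ∈ Finset.range (n + 1),
        if 2 ∣ k then (n.choose k : ℤ) * E (n - k) else 0) = 0) (r : ℕ) :
    (E r : ZMod p) = ∑ j ∈ range p, (-1 : ZMod p) ^ j * (2 * (j : ZMod p) + 1) ^ r := by
  have h2 : (2 : ZMod p) ≠ 0 := by
    intro h
    have : p ∣ 2 := (ZMod.natCast_eq_zero_iff 2 p).1 (by exact_mod_cast h)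
    have h3 := (Nat.prime_dvd_prime_iff_eq Fact.out Nat.prime_two).1 this
    rw [h3] at hodd
    exact absurd hodd (by decide)
  have hG : ∀ n : ℕ, 1 ≤ n → (∑ k ∈ Finset.range (n + 1), if 2 ∣ k then (n.choose k : ZMod p) *
      ∑ j ∈ range p, (-1 : ZMod p) ^ j * (2 * (j : ZMod p) + 1) ^ (n - k) else 0) = 0 := by
    intro n hn
    apply mul_left_cancel₀ h2
    have e : (∑ k ∈ Finset.range (n + 1), if 2 ∣ k then (n.choose k : ZMod p) *
      ∑ j ∈ range p, (-1 : ZMod p) ^ j * (2 * (j : ZMod p) + 1) ^ (n - k) else 0) =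
      ∑ j ∈ range p, (-1 : ZMod p) ^ j * ∑ k ∈ Finset.range (n + 1),
        if 2 ∣ k then (n.choose k : ZMod p) * (2 * (j : ZMod p) + 1) ^ (n - k) else 0 := by
      simp_rw [mul_sum]
      rw [sum_comm]
      refine sum_congr rfl fun k _ => ?_
      split_ifs
      · exact sum_congr rfl fun j _ => by ring
      · simp
    rw [e, mul_sum]
    have e2 : ∀ j ∈ range p, 2 * ((-1 : ZMod p) ^ j * ∑ k ∈ Finset.range (n + 1),
        if 2 ∣ k then (n.choose k : ZMod p) * (2 * (j : ZMod p) + 1) ^ (n - k) else 0) =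
        (-1 : ZMod p) ^ j * ((fun i : ℕ => (2 * (i : ZMod p)) ^ n) j +
          (fun i : ℕ => (2 * (i : ZMod p)) ^ n) (j + 1)) := by
      intro j _
      rw [mul_left_comm, even_binomial]
      push_cast
      ring
    rw [sum_congr rfl e2, alternating_telescope]
    simp [show n ≠ 0 by omega]
  induction r using Nat.strong_induction_on with
  | _ r ih =>
    rcases Nat.eq_zero_or_pos r with rfl | hr
    · have := alternating_telescope (fun _ => (1 : ZMod p)) p
      rw [hodd.neg_one_pow] at this
      rw [hE0]
      apply mul_left_cancel₀ h2
      rw [mul_sum]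
      simp only [pow_zero]
      rw [← sub_eq_zero]
      have e3 : ∑ i ∈ range p, 2 * ((-1 : ZMod p) ^ i * 1) =
        ∑ j ∈ range p, (-1 : ZMod p) ^ j * (1 + 1) := sum_congr rfl fun j _ => by ring
      rw [e3, this]
      push_cast
      ring
    · have h1 := congrArg (Int.cast (R := ZMod p)) (hE r hr)
      have h3 := hG r hr
      rw [Int.cast_sum, Int.cast_zero] at h1
      rw [sum_range_succ'] at h1 h3
      simp only [dvd_zero, if_true, Nat.choose_zero_right, Nat.cast_one, one_mul, Nat.sub_zero]
        at h1 h3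
      have e4 : ∀ k ∈ range r, ((if 2 ∣ k + 1 then (r.choose (k + 1) : ℤ) * E (r - (k + 1))
          else 0 : ℤ) : ZMod p) = if 2 ∣ k + 1 then (r.choose (k + 1) : ZMod p) *
          ∑ j ∈ range p, (-1 : ZMod p) ^ j * (2 * (j : ZMod p) + 1) ^ (r - (k + 1)) else 0 := by
        intro k _
        split_ifs
        · rw [← ih (r - (k + 1)) (by omega)]; push_cast; rfl
        · simp
      rw [sum_congr rfl e4] at h1
      linear_combination h1 - h3

/-- The residues of `1, ..., p - 1` are nonzero. -/
lemma cast_ne (p : ℕ) (k : ℕ) (h1 : 1 ≤ k) (h2 : k < p) :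
    (k : ZMod p) ≠ 0 := by
  intro h
  have := Nat.le_of_dvd (by omega) ((ZMod.natCast_eq_zero_iff k p).1 h)
  omega

lemma two_mul_cast_add_one (p n : ℕ) (hpn : p = 2 * n + 1) : 2 * (n : ZMod p) + 1 = 0 := by
  have : ((2 * n + 1 : ℕ) : ZMod p) = 0 := (ZMod.natCast_eq_zero_iff _ p).2 (by rw [hpn])
  exact_mod_cast this

lemma pow_sub_three (p : ℕ) [Fact p.Prime] (hp3 : 3 < p) (x : ZMod p) :
    x ^ (p - 3) = (x ^ 2)⁻¹ := by
  by_cases hx : x = 0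
  · subst hx
    rw [zero_pow (by omega)]; simp
  · have := ZMod.pow_card_sub_one_eq_one hx
    rw [show p - 1 = (p - 3) + 2 by omega, pow_add] at this
    exact eq_inv_of_mul_eq_one_left this

lemma sum_inv_sq_zmod (p n : ℕ) [Fact p.Prime] (hpn : p = 2 * n + 1) (hp3 : 3 < p) :
    ∑ j ∈ range n, (((j : ZMod p) + 1) ^ 2)⁻¹ = 0 := by
  have h0 := two_mul_cast_add_one p n hpn
  have h2 : (2 : ZMod p) ≠ 0 := by exact_mod_cast cast_ne p 2 (by omega) (by omega)
  have hs := FiniteField.sum_pow_lt_card_sub_one (ZMod p) (p - 3) (by rw [ZMod.card]; omega)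
  have hr : ∑ x : ZMod p, x ^ (p - 3) = ∑ j ∈ range p, ((j : ZMod p)) ^ (p - 3) := by
    symm
    refine sum_bij' (fun j _ => (j : ZMod p)) (fun x _ => x.val) ?_ ?_ ?_ ?_ ?_
    · simp
    · intro x _; simpa using ZMod.val_lt x
    · intro j hj; exact ZMod.val_cast_of_lt (by simpa using hj)
    · intro x _; simp
    · simp
  rw [hr] at hs
  -- Pair `k ≤ n` with `p - k`: both have the same square.
  have h5 : range p = range (n + 1 + n) := by rw [hpn]; congr 1; omega
  rw [h5, sum_range_add, sum_range_succ'] at hs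
  rw [← sum_range_reflect (fun x => ((n + 1 + x : ℕ) : ZMod p) ^ (p - 3))] at hs
  have h6 : ∀ j ∈ range n, ((n + 1 + (n - 1 - j) : ℕ) : ZMod p) ^ (p - 3) =
      (((j : ZMod p) + 1) ^ 2)⁻¹ := by
    intro j hj
    have hj' : j < n := by simpa using hj
    rw [pow_sub_three p hp3]
    congr 1
    rw [show n + 1 + (n - 1 - j) = 2 * n - j by omega, Nat.cast_sub (by omega)]
    push_cast
    linear_combination (2 * (n : ZMod p) + 1 - 2 * (j + 1)) * h0
  rw [sum_congr rfl h6] at hs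
  simp only [pow_sub_three p hp3] at hs
  simp at hs
  apply mul_left_cancel₀ h2
  linear_combination hs

lemma two_euler (p n : ℕ) [Fact p.Prime] (hpn : p = 2 * n + 1) (hp3 : 3 < p) :
    2 * ∑ j ∈ range p, (-1 : ZMod p) ^ j * (2 * (j : ZMod p) + 1) ^ (p - 3) =
      (-1) ^ n * ∑ j ∈ range n, (-1 : ZMod p) ^ (j + 1) * (((j : ZMod p) + 1) ^ 2)⁻¹ := by
  have h0 := two_mul_cast_add_one p n hpn
  have h2 : (2 : ZMod p) ≠ 0 := by exact_mod_cast cast_ne p 2 (by omega) (by omega)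
  simp only [pow_sub_three p hp3]
  have h5 : range p = range (2 * n + 1) := by rw [hpn]
  rw [h5, sum_centered]
  have a : ∀ j ∈ range n, (-1 : ZMod p) ^ (n - 1 - j) *
      ((2 * ((n - 1 - j : ℕ) : ZMod p) + 1) ^ 2)⁻¹ =
      (-1) ^ n / 4 * ((-1 : ZMod p) ^ (j + 1) * (((j : ZMod p) + 1) ^ 2)⁻¹) := by
    intro j hj
    have hj' : j < n := by simpa using hj
    have e1 : (-1 : ZMod p) ^ (n - 1 - j) = (-1) ^ n * (-1) ^ (j + 1) := by
      obtain ⟨d, rfl⟩ : ∃ d, n = d + (j + 1) := ⟨n - (j + 1), by omega⟩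
      rw [show d + (j + 1) - 1 - j = d by omega, pow_add, mul_assoc, ← mul_pow]
      simp
    have e2 : (2 * ((n - 1 - j : ℕ) : ZMod p) + 1) ^ 2 = 4 * ((j : ZMod p) + 1) ^ 2 := by
      rw [show n - 1 - j = n - (j + 1) by omega, Nat.cast_sub (by omega)]
      push_cast
      linear_combination (2 * (n : ZMod p) + 1 - 4 * (j + 1)) * h0
    rw [e1, e2, mul_inv]
    ring
  have b : ∀ j ∈ range n, (-1 : ZMod p) ^ (n + 1 + j) *
      ((2 * ((n + 1 + j : ℕ) : ZMod p) + 1) ^ 2)⁻¹ =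
      (-1) ^ n / 4 * ((-1 : ZMod p) ^ (j + 1) * (((j : ZMod p) + 1) ^ 2)⁻¹) := by
    intro j hj
    have e2 : (2 * ((n + 1 + j : ℕ) : ZMod p) + 1) ^ 2 = 4 * ((j : ZMod p) + 1) ^ 2 := by
      push_cast
      linear_combination (2 * (n : ZMod p) + 1 + 4 * (j + 1)) * h0
    rw [e2, mul_inv]
    ring
  rw [sum_congr rfl a, sum_congr rfl b, ← mul_sum, h0]
  have h4 : (4 : ZMod p) ≠ 0 := by
    rw [show (4 : ZMod p) = 2 * 2 by norm_num]; exact mul_ne_zero h2 h2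
  simp
  field_simp
  ring

lemma centralBinom_zmod (p n : ℕ) [Fact p.Prime] (hpn : p = 2 * n + 1) (k : ℕ) (hk : k ≤ n) :
    (Nat.choose (2 * k) k : ZMod p) = (-4) ^ k * (n.choose k : ZMod p) := by
  have h0 := two_mul_cast_add_one p n hpn
  induction k with
  | zero => simp
  | succ k ih =>
    have hk1 : (k : ZMod p) + 1 ≠ 0 := by
      exact_mod_cast cast_ne p (k + 1) (by omega) (by omega)
    have h1 := congrArg (Nat.cast (R := ZMod p)) (Nat.succ_mul_centralBinom_succ k)
    rw [Nat.centralBinom, Nat.centralBinom] at h1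
    rw [Nat.cast_mul, Nat.cast_mul, ih (by omega)] at h1
    have h2 := congrArg (Nat.cast (R := ZMod p)) (Nat.choose_succ_right_eq n k)
    rw [Nat.cast_mul, Nat.cast_mul, Nat.cast_sub (by omega)] at h2
    push_cast at h1 h2
    apply mul_left_cancel₀ hk1
    rw [h1]
    linear_combination (-4) ^ k * 4 * h2 + 2 * (-4) ^ k * (n.choose k : ZMod p) * h0

/-- The value of the sum in `ZMod p`, which is that of `2 E_{p-3}` in `two_euler`. The term `j` belongs to `k = j + 1`. -/
lemma zmod_sum (p n : ℕ) [Fact p.Prime] (hpn : p = 2 * n + 1) (hp3 : 3 < p) :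
    ∑ j ∈ range n, (4 : ZMod p) ^ (j + 1) / (((j : ZMod p) + 1) * (2 * ((j : ZMod p) + 1) - 1) *
        (Nat.choose (2 * (j + 1)) (j + 1) : ZMod p)) =
      (-1) ^ n * ∑ j ∈ range n, (-1 : ZMod p) ^ (j + 1) * (((j : ZMod p) + 1) ^ 2)⁻¹ := by
  have h0 := two_mul_cast_add_one p n hpn
  have h2 : (2 : ZMod p) ≠ 0 := by exact_mod_cast cast_ne p 2 (by omega) (by omega)
  have h4 : (4 : ZMod p) ≠ 0 := by
    rw [show (4 : ZMod p) = 2 * 2 by norm_num]; exact mul_ne_zero h2 h2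
  have hN : ∀ k : ℕ, 1 ≤ k → k ≤ n → (k : ZMod p) ≠ 0 := fun k a b =>
    cast_ne p k a (by omega)
  have hB := sum_inv_sq_choose hN n le_rfl
  have hH := sum_inv_sq_zmod p n hpn hp3
  have hR : ∑ j ∈ range n, (1 + 2 * (-1 : ZMod p) ^ (j + 1)) / ((j : ZMod p) + 1) ^ 2 =
      2 * ∑ j ∈ range n, (-1 : ZMod p) ^ (j + 1) * (((j : ZMod p) + 1) ^ 2)⁻¹ := by
    rw [← zero_add (2 * _), ← hH, mul_sum, ← sum_add_distrib]
    exact sum_congr rfl fun j _ => by ring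
  rw [hR] at hB
  have hT : ∀ j ∈ range n, (4 : ZMod p) ^ (n - 1 - j + 1) /
      ((((n - 1 - j : ℕ) : ZMod p) + 1) * (2 * (((n - 1 - j : ℕ) : ZMod p) + 1) - 1) *
        (Nat.choose (2 * (n - 1 - j + 1)) (n - 1 - j + 1) : ZMod p)) =
      (-1) ^ n / 2 * ((-1 : ZMod p) ^ (j + 1) /
        (((j : ZMod p) + 1) ^ 2 * (n.choose (j + 1) : ZMod p))) := by
    intro j hj
    obtain ⟨d, hd⟩ : ∃ d, n = d + (j + 1) := ⟨n - (j + 1), by simp at hj; omega⟩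
    rw [show n - 1 - j = d by omega, centralBinom_zmod p n hpn (d + 1) (by omega)]
    have hdK : (n : ZMod p) = d + (j + 1) := by rw [hd]; push_cast; ring
    -- `k C(n,k)` is symmetric under `k ↦ n + 1 - k`.
    have hsym : ((d : ZMod p) + 1) * (n.choose (d + 1) : ZMod p) =
        ((j : ZMod p) + 1) * (n.choose (j + 1) : ZMod p) := by
      have a := Nat.add_one_mul_choose_eq (d + j) d
      have b := Nat.add_one_mul_choose_eq (d + j) j
      rw [Nat.choose_symm_add] at a
      rw [a] at b
      rw [show n = d + j + 1 by omega]
      have := congrArg (Nat.cast (R := ZMod p)) b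
      push_cast at this
      linear_combination this
    have hj1 : (j : ZMod p) + 1 ≠ 0 := by exact_mod_cast hN (j + 1) (by omega) (by omega)
    have hc := choose_cast_ne hN n (j + 1) le_rfl (by omega)
    have h44 : (-4 : ZMod p) ^ (d + 1) = (-1) ^ (d + 1) * 4 ^ (d + 1) := by
      rw [← mul_pow]; congr 1; ring
    have hden : ((d : ZMod p) + 1) * (2 * ((d : ZMod p) + 1) - 1) *
        ((-4) ^ (d + 1) * (n.choose (d + 1) : ZMod p)) =
        (-1) ^ d * 4 ^ (d + 1) * (2 * ((j : ZMod p) + 1) ^ 2 * (n.choose (j + 1) : ZMod p)) := by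
      rw [h44]
      have e : 2 * ((d : ZMod p) + 1) - 1 = - (2 * (j + 1)) := by
        linear_combination h0 - 2 * hdK
      rw [e]
      linear_combination (-1) ^ d * 4 ^ (d + 1) * 2 * ((j : ZMod p) + 1) * hsym
    have hs : (-1 : ZMod p) ^ n = (-1) ^ d * (-1) ^ (j + 1) := by rw [hd, pow_add]
    have hu : ∀ i : ℕ, (-1 : ZMod p) ^ i * (-1) ^ i = 1 := fun i => by rw [← mul_pow]; simp
    have hd1 : (-1 : ZMod p) ^ d ≠ 0 := pow_ne_zero _ (by simp)
    have h4d : (4 : ZMod p) ^ (d + 1) ≠ 0 := pow_ne_zero _ h4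
    rw [hden, hs, div_mul_div_comm, div_eq_div_iff]
    · linear_combination (-4 ^ (d + 1) * (2 * ((j : ZMod p) + 1) ^ 2 * (n.choose (j + 1) : ZMod p)))
        * (hu d * ((-1) ^ (j + 1) * (-1) ^ (j + 1)) + hu (j + 1))
    · exact mul_ne_zero (mul_ne_zero hd1 h4d)
        (mul_ne_zero (mul_ne_zero h2 (pow_ne_zero _ hj1)) hc)
    · exact mul_ne_zero h2 (mul_ne_zero (pow_ne_zero _ hj1) hc)
  rw [← sum_range_reflect, sum_congr rfl hT, ← mul_sum, hB]
  field_simp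

/-! ### Reduction of rationals modulo `p` -/

/-- `Reduces p q z`: the rational `q` has a representation with denominator prime to `p`, and its
residue class is `z`. -/
def Reduces (p : ℕ) [Fact p.Prime] (q : ℚ) (z : ZMod p) : Prop :=
  ∃ a b : ℤ, (b : ZMod p) ≠ 0 ∧ q = a / b ∧ z = a / b

lemma rat_ne_of_zmod_ne {p : ℕ} {b : ℤ} (hb : (b : ZMod p) ≠ 0) : (b : ℚ) ≠ 0 := by
  intro h
  apply hb
  have : b = 0 := by exact_mod_cast h
  simp [this]

lemma Reduces.int (p : ℕ) [Fact p.Prime] (a : ℤ) : Reduces p a a := ⟨a, 1, by simp⟩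

lemma Reduces.add {p : ℕ} [Fact p.Prime] {q r : ℚ} {y z : ZMod p} (h1 : Reduces p q y)
    (h2 : Reduces p r z) : Reduces p (q + r) (y + z) := by
  obtain ⟨a, b, hb, rfl, rfl⟩ := h1
  obtain ⟨c, d, hd, rfl, rfl⟩ := h2
  refine ⟨a * d + b * c, b * d, ?_, ?_, ?_⟩
  · push_cast; exact mul_ne_zero hb hd
  · push_cast; exact div_add_div _ _ (rat_ne_of_zmod_ne hb) (rat_ne_of_zmod_ne hd)
  · push_cast; exact div_add_div _ _ hb hd

lemma Reduces.sum {p : ℕ} [Fact p.Prime] {f : ℕ → ℚ} {g : ℕ → ZMod p} (n : ℕ)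
    (h : ∀ j < n, Reduces p (f j) (g j)) :
    Reduces p (∑ j ∈ range n, f j) (∑ j ∈ range n, g j) := by
  induction n with
  | zero => simpa using Reduces.int p 0
  | succ n ih =>
    rw [sum_range_succ, sum_range_succ]
    exact (ih fun j hj => h j (by omega)).add (h n (by omega))

lemma Reduces.norm_le {p : ℕ} [Fact p.Prime] {q : ℚ} (h : Reduces p q 0) :
    padicNorm p q ≤ (p : ℚ) ^ (-1 : ℤ) := by
  obtain ⟨a, b, hb, rfl, h0⟩ := h
  have ha : (a : ZMod p) = 0 := by
    rcases div_eq_zero_iff.1 h0.symm with h | h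
    · exact h
    · exact absurd h hb
  have hd : (p : ℤ) ∣ a := (ZMod.intCast_zmod_eq_zero_iff_dvd a p).1 ha
  have hnb : ¬ (p : ℤ) ∣ b := fun h => hb ((ZMod.intCast_zmod_eq_zero_iff_dvd b p).2 h)
  have e1 : padicNorm p (b : ℚ) = 1 := (padicNorm.int_eq_one_iff b).2 hnb
  have e2 : padicNorm p (a : ℚ) ≤ (p : ℚ) ^ (-(1 : ℕ) : ℤ) :=
    (padicNorm.dvd_iff_norm_le).1 (by simpa using hd)
  rw [padicNorm.div, e1, div_one]
  exact_mod_cast e2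

/-- Sun: for an odd prime `p`,
`∑_{k=1}^{(p-1)/2} 4^k/(k·(2k-1)·C(2k,k)) ≡ 2·E_{p-3} (mod p)`,
where `E` is the sequence of Euler numbers, characterized by `E 0 = 1` and
`∑_{k ≤ n, 2 ∣ k} C(n,k) E_{n-k} = 0` for `n ≥ 1`. -/
theorem sun_lemma_2_2_second (p : ℕ) (hp : p.Prime) (hodd : Odd p)
    (E : ℕ → ℤ) (hE0 : E 0 = 1)
    (hE : ∀ n : ℕ, 1 ≤ n →
      (∑ k ∈ Finset.range (n + 1),
        if 2 ∣ k then (n.choose k : ℤ) * E (n - k) else 0) = 0) :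
    padicNorm p ((∑ k ∈ Finset.Icc 1 ((p - 1) / 2),
        (4 : ℚ) ^ k / ((k : ℚ) * (2 * (k : ℚ) - 1) * (Nat.choose (2 * k) k : ℚ))) -
      2 * (E (p - 3) : ℚ)) ≤ (p : ℚ) ^ (-1 : ℤ) := by
  have : Fact p.Prime := ⟨hp⟩
  obtain ⟨n, hpn⟩ := hodd
  have hn : (p - 1) / 2 = n := by omega
  have h2p := hp.two_le
  rw [hn]
  rcases Nat.lt_or_ge 3 p with hp3 | hp3
  · have hicc : ∀ f : ℕ → ℚ, ∑ k ∈ Icc 1 n, f k = ∑ j ∈ range n, f (j + 1) := by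
      intro f
      rw [← Finset.Ico_add_one_right_eq_Icc, sum_Ico_eq_sum_range]
      simp [add_comm]
    rw [hicc]
    have hN : ∀ k : ℕ, 1 ≤ k → k ≤ n → (k : ZMod p) ≠ 0 := fun k a b =>
      cast_ne p k a (by omega)
    have hsum := Reduces.sum (p := p)
      (f := fun j => (4 : ℚ) ^ (j + 1) / (((j + 1 : ℕ) : ℚ) * (2 * ((j + 1 : ℕ) : ℚ) - 1) *
        (Nat.choose (2 * (j + 1)) (j + 1) : ℚ)))
      (g := fun j => (4 : ZMod p) ^ (j + 1) / (((j : ZMod p) + 1) * (2 * ((j : ZMod p) + 1) - 1) *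
        (Nat.choose (2 * (j + 1)) (j + 1) : ZMod p))) n (by
        intro j hj
        refine ⟨4 ^ (j + 1), ((j : ℤ) + 1) * (2 * ((j : ℤ) + 1) - 1) *
          (Nat.choose (2 * (j + 1)) (j + 1) : ℤ), ?_, ?_, ?_⟩
        · have a := hN (j + 1) (by omega) (by omega)
          have b := cast_ne p (2 * j + 1) (by omega) (by omega)
          have c : (Nat.choose (2 * (j + 1)) (j + 1) : ZMod p) ≠ 0 :=
            choose_cast_ne (N := 2 * n) (fun k h1 h2 => cast_ne p k h1 (by omega)) _ _
              (by omega) (by omega)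
          push_cast at a b ⊢
          refine mul_ne_zero (mul_ne_zero a ?_) c
          intro h
          apply b
          linear_combination h
        · push_cast; rfl
        · push_cast; rfl)
    have htot := hsum.add (Reduces.int p (-(2 * E (p - 3))))
    have hz := zmod_sum p n hpn hp3
    have he := two_euler p n hpn hp3
    rw [← euler_zmod p ⟨n, hpn⟩ E hE0 hE] at he
    rw [hz, ← he] at htot
    have hzero : 2 * (E (p - 3) : ZMod p) + ((-(2 * E (p - 3)) : ℤ) : ZMod p) = 0 := by
      push_cast
      ring
    rw [hzero] at htot
    convert htot.norm_le using 2
    push_cast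
    ring
  · have h3 : p = 3 := by omega
    have h1 : n = 1 := by omega
    subst h1 h3
    norm_num [hE0]
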